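/- The map assigning to μ∈ba₀(λ) the functional f ↦ ∫f dμ is a linear isomorphism from ba₀(λ) onto the space of continuous (with respect to the metric d) linear functionals on L⁰(λ): every f∈L⁰(λ) is μ-integrable for every μ∈ba₀(λ), the functional f↦∫f dμ is continuous and linear on L⁰(λ), and every continuous linear functional φ on L⁰(λ) satisfies φ(f)=∫f dμ for a unique μ∈ba₀(λ). -/

import Mathlib

open Set Filter Topology

namespace FA

/-- An algebra of subsets of `Ω`. -/
structure SetAlg (Ω : Type*) where
  sets : Set (Set Ω)
  empty_mem : ∅ ∈ sets
  compl_mem : ∀ ⦃A⦄, A ∈ sets → Aᶜ ∈ sets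
  union_mem : ∀ ⦃A B⦄, A ∈ sets → B ∈ sets → A ∪ B ∈ sets

/-- A bounded, finitely additive real-valued set function on the algebra `𝒜`,
i.e. an element of `ba(𝒜)`. -/
structure BAMeasure {Ω : Type*} (𝒜 : SetAlg Ω) where
  toFun : Set Ω → ℝ
  map_empty : toFun ∅ = 0
  additive : ∀ ⦃A B : Set Ω⦄, A ∈ 𝒜.sets → B ∈ 𝒜.sets → Disjoint A B →
      toFun (A ∪ B) = toFun A + toFun B
  bounded : ∃ M : ℝ, ∀ A ∈ 𝒜.sets, |toFun A| ≤ M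

variable {Ω : Type*} {𝒜 : SetAlg Ω}

/-- Total variation `|λ|(A) = λ⁺(A) + λ⁻(A)`. -/
noncomputable def var (lam : BAMeasure 𝒜) (A : Set Ω) : ℝ :=
  sSup {x | ∃ B ∈ 𝒜.sets, B ⊆ A ∧ x = lam.toFun B} +
  sSup {x | ∃ B ∈ 𝒜.sets, B ⊆ A ∧ x = -lam.toFun B}

/-- The outer measure `|λ|*(B) = inf {|λ|(A) : A ∈ 𝒜, B ⊆ A}`. -/
noncomputable def outer (lam : BAMeasure 𝒜) (B : Set Ω) : ℝ :=
  sInf {x | ∃ A ∈ 𝒜.sets, B ⊆ A ∧ x = var lam A}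

/-- `𝒜`-simple functions. -/
def IsSimple (𝒜 : SetAlg Ω) (f : Ω → ℝ) : Prop :=
  (Set.range f).Finite ∧ ∀ r : ℝ, f ⁻¹' {r} ∈ 𝒜.sets

/-- `λ`-convergence: `(f n)` converges to `g` in `λ`-measure. -/
def LConv (lam : BAMeasure 𝒜) (f : ℕ → Ω → ℝ) (g : Ω → ℝ) : Prop :=
  ∀ c > (0:ℝ), Tendsto (fun n => outer lam {ω | c < |f n ω - g ω|}) atTop (𝓝 0)

/-- `λ`-Cauchy sequences. -/
def LCauchy (lam : BAMeasure 𝒜) (f : ℕ → Ω → ℝ) : Prop :=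
  ∀ c > (0:ℝ), ∀ ε > (0:ℝ), ∃ N : ℕ, ∀ p q : ℕ,
    outer lam {ω | c < |f (N + p) ω - f (N + q) ω|} < ε

/-- `L⁰(λ)`: `λ`-limits of sequences of `𝒜`-simple functions. -/
def L0 (lam : BAMeasure 𝒜) : Set (Ω → ℝ) :=
  {f | ∃ s : ℕ → Ω → ℝ, (∀ n, IsSimple 𝒜 (s n)) ∧ LConv lam s f}

/-- The metric of `L⁰(λ)`: `d(f,g) = inf {c + |λ|*(|f-g| ≥ c) : c > 0}`. -/
noncomputable def dL0 (lam : BAMeasure 𝒜) (f g : Ω → ℝ) : ℝ :=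
  sInf {x | ∃ c > (0:ℝ), x = c + outer lam {ω | c ≤ |f ω - g ω|}}

/-- A set `K` is bounded in `L⁰(λ)` if `lim_{c→∞} sup_{f∈K} |λ|*(|f|>c) = 0`. -/
def BddL0 (lam : BAMeasure 𝒜) (K : Set (Ω → ℝ)) : Prop :=
  ∀ ε > (0:ℝ), ∃ c₀ : ℝ, ∀ c ≥ c₀, ∀ f ∈ K, outer lam {ω | c < |f ω|} < ε

/-- The nonnegative elements of `L⁰(λ)`. -/
def L0pos (lam : BAMeasure 𝒜) : Set (Ω → ℝ) := {f ∈ L0 lam | ∀ ω, 0 ≤ f ω}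

/-- The elementary integral of a simple function with respect to a set function. -/
noncomputable def simpleIntegral (m : Set Ω → ℝ) (f : Ω → ℝ) : ℝ :=
  ∑ᶠ r : ℝ, r * m (f ⁻¹' {r})

/-- Dunford–Schwartz integrability: there is a sequence of simple functions converging to `f`
in `λ`-measure which is Cauchy in mean. -/
def MemL1 (lam : BAMeasure 𝒜) (f : Ω → ℝ) : Prop :=
  ∃ s : ℕ → Ω → ℝ, (∀ n, IsSimple 𝒜 (s n)) ∧ LConv lam s f ∧
    ∀ ε > (0:ℝ), ∃ N : ℕ, ∀ m ≥ N, ∀ n ≥ N,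
      simpleIntegral (var lam) (fun ω => |s m ω - s n ω|) < ε

/-- `L¹(λ)`. -/
def L1 (lam : BAMeasure 𝒜) : Set (Ω → ℝ) := {f | MemL1 lam f}

open scoped Classical in
/-- The Dunford–Schwartz integral `∫ f dλ`. -/
noncomputable def integral (lam : BAMeasure 𝒜) (f : Ω → ℝ) : ℝ :=
  if h : MemL1 lam f then
    limUnder atTop (fun n => simpleIntegral lam.toFun (h.choose n))
  else 0

open scoped Classical in
/-- The `L¹(λ)` seminorm `∫ |f| d|λ|`. -/
noncomputable def l1Norm (lam : BAMeasure 𝒜) (f : Ω → ℝ) : ℝ :=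
  if h : MemL1 lam f then
    limUnder atTop (fun n => simpleIntegral (var lam) (fun ω => |h.choose n ω|))
  else 0

/-- A set is bounded in `L¹(μ)` if the integrals `∫|f| d|μ|` are uniformly bounded. -/
def BddL1 (mu : BAMeasure 𝒜) (K : Set (Ω → ℝ)) : Prop :=
  ∃ M : ℝ, ∀ f ∈ K, l1Norm mu f ≤ M

/-- Finitely additive probability measures. -/
def IsFAProb (mu : BAMeasure 𝒜) : Prop :=
  mu.toFun Set.univ = 1 ∧ ∀ A ∈ 𝒜.sets, 0 ≤ mu.toFun A

/-- `μ ∈ 𝔓_*(λ)`: a finitely additive probability with `|μ| ≤ c |λ|` and the same null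
sets as `λ`. -/
def PStar (lam mu : BAMeasure 𝒜) : Prop :=
  IsFAProb mu ∧ (∃ c : ℝ, 0 ≤ c ∧ ∀ A ∈ 𝒜.sets, var mu A ≤ c * var lam A) ∧
  ∀ A ∈ 𝒜.sets, (mu.toFun A = 0 ↔ var lam A = 0)

/-- `μ ∈ 𝔓_*(λ; K)`. -/
def PStarWith (lam : BAMeasure 𝒜) (K : Set (Ω → ℝ)) (mu : BAMeasure 𝒜) : Prop :=
  PStar lam mu ∧ K ⊆ L1 mu ∧ BddL1 mu K

/-- `f` is a `λ`-a.s. lower bound of `K`. -/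
def ASLowerBound (lam : BAMeasure 𝒜) (f : Ω → ℝ) (K : Set (Ω → ℝ)) : Prop :=
  ∀ c > (0:ℝ), ∀ k ∈ K, outer lam {ω | k ω < f ω - c} = 0

/-- Absolute continuity `μ ≪ λ` for bounded finitely additive set functions. -/
def AbsCont (mu lam : BAMeasure 𝒜) : Prop :=
  ∀ ε > (0:ℝ), ∃ δ > (0:ℝ), ∀ A ∈ 𝒜.sets, var lam A < δ → var mu A < ε

/-- `λ ∈ ba₀(𝒜)`: the range of `λ` is finite. -/
def FiniteRange (lam : BAMeasure 𝒜) : Prop := (lam.toFun '' 𝒜.sets).Finite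

/-- `μ ∈ ba₀(λ)`. -/
def BA0rel (lam mu : BAMeasure 𝒜) : Prop := FiniteRange mu ∧ AbsCont mu lam

/-- Strong continuity: arbitrarily fine finite partitions. -/
def StronglyContinuous (lam : BAMeasure 𝒜) : Prop :=
  ∀ ε > (0:ℝ), ∃ (N : ℕ) (A : Fin N → Set Ω), (∀ n, A n ∈ 𝒜.sets) ∧
    Pairwise (Function.onFun Disjoint A) ∧ (⋃ n, A n) = Set.univ ∧
    ∀ n, var lam (A n) < ε

/-- Orthogonality of bounded finitely additive set functions. -/
def Orthogonal (mu nu : BAMeasure 𝒜) : Prop :=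
  ∀ ε > (0:ℝ), ∃ A ∈ 𝒜.sets, var mu A < ε ∧ var nu Aᶜ < ε

/-- Strong discontinuity: orthogonal to every strongly continuous element of `ba(𝒜)`. -/
def StronglyDiscontinuous (mu : BAMeasure 𝒜) : Prop :=
  ∀ nu : BAMeasure 𝒜, StronglyContinuous nu → Orthogonal mu nu

/-- Countable additivity of `λ` on the algebra `𝒜`. -/
def CountablyAdditive (lam : BAMeasure 𝒜) : Prop :=
  ∀ A : ℕ → Set Ω, (∀ n, A n ∈ 𝒜.sets) → Pairwise (Function.onFun Disjoint A) →
    (⋃ n, A n) ∈ 𝒜.sets → HasSum (fun n => lam.toFun (A n)) (lam.toFun (⋃ n, A n))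

/-- `𝒜` is a σ-algebra. -/
def IsSigmaAlg (𝒜 : SetAlg Ω) : Prop :=
  ∀ A : ℕ → Set Ω, (∀ n, A n ∈ 𝒜.sets) → (⋃ n, A n) ∈ 𝒜.sets

/-- Linearity of a functional on `L⁰(λ)`. -/
def LinearOnL0 (lam : BAMeasure 𝒜) (φ : (Ω → ℝ) → ℝ) : Prop :=
  (∀ f ∈ L0 lam, ∀ g ∈ L0 lam, φ (f + g) = φ f + φ g) ∧
  (∀ a : ℝ, ∀ f ∈ L0 lam, φ (a • f) = a * φ f)

/-- Continuity of a functional on `L⁰(λ)` with respect to the metric `d`. -/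
def ContinuousOnL0 (lam : BAMeasure 𝒜) (φ : (Ω → ℝ) → ℝ) : Prop :=
  ∀ f ∈ L0 lam, ∀ ε > (0:ℝ), ∃ δ > (0:ℝ), ∀ g ∈ L0 lam, dL0 lam g f < δ → |φ g - φ f| < ε

/-! ### Helper material -/

theorem SetAlg.univ_mem (𝒜 : SetAlg Ω) : (Set.univ : Set Ω) ∈ 𝒜.sets := by
  have := 𝒜.compl_mem 𝒜.empty_mem
  simpa using this

theorem SetAlg.inter_mem (𝒜 : SetAlg Ω) {A B : Set Ω} (hA : A ∈ 𝒜.sets) (hB : B ∈ 𝒜.sets) :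
    A ∩ B ∈ 𝒜.sets := by
  have := 𝒜.compl_mem (𝒜.union_mem (𝒜.compl_mem hA) (𝒜.compl_mem hB))
  simpa [Set.compl_union] using this

theorem SetAlg.diff_mem (𝒜 : SetAlg Ω) {A B : Set Ω} (hA : A ∈ 𝒜.sets) (hB : B ∈ 𝒜.sets) :
    A \ B ∈ 𝒜.sets := by
  rw [Set.diff_eq]
  exact 𝒜.inter_mem hA (𝒜.compl_mem hB)

theorem SetAlg.biUnion_mem (𝒜 : SetAlg Ω) {ι : Type*} (T : Finset ι) (A : ι → Set Ω)
    (h : ∀ i ∈ T, A i ∈ 𝒜.sets) : (⋃ i ∈ T, A i) ∈ 𝒜.sets := by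
  classical
  induction T using Finset.induction_on with
  | empty => simpa using 𝒜.empty_mem
  | insert a T ha ih =>
    rw [Finset.set_biUnion_insert]
    exact 𝒜.union_mem (h a (by simp)) (ih fun i hi => h i (by simp [hi]))

/-- finitely additive set functions -/
def IsFAdd (𝒜 : SetAlg Ω) (m : Set Ω → ℝ) : Prop :=
  m ∅ = 0 ∧ ∀ A B : Set Ω, A ∈ 𝒜.sets → B ∈ 𝒜.sets → Disjoint A B → m (A ∪ B) = m A + m B

theorem BAMeasure.isFAdd (mu : BAMeasure 𝒜) : IsFAdd 𝒜 mu.toFun :=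
  ⟨mu.map_empty, fun _ _ hA hB h => mu.additive hA hB h⟩

theorem IsFAdd.biUnion {m : Set Ω → ℝ} (hm : IsFAdd 𝒜 m) {ι : Type*} (T : Finset ι)
    (A : ι → Set Ω) (h : ∀ i ∈ T, A i ∈ 𝒜.sets)
    (hd : ∀ i ∈ T, ∀ j ∈ T, i ≠ j → Disjoint (A i) (A j)) :
    m (⋃ i ∈ T, A i) = ∑ i ∈ T, m (A i) := by
  classical
  induction T using Finset.induction_on with
  | empty => simpa using hm.1
  | insert a T ha ih =>
    rw [Finset.set_biUnion_insert, Finset.sum_insert ha, hm.2, ih]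
    · exact fun i hi => h i (by simp [hi])
    · exact fun i hi j hj => hd i (by simp [hi]) j (by simp [hj])
    · exact h a (by simp)
    · exact 𝒜.biUnion_mem T A fun i hi => h i (by simp [hi])
    · rw [Set.disjoint_iUnion₂_right]
      intro i hi
      exact hd a (by simp) i (by simp [hi]) (by rintro rfl; exact ha hi)

/-- positive part -/
noncomputable def pp (𝒜 : SetAlg Ω) (m : Set Ω → ℝ) (A : Set Ω) : ℝ :=
  sSup {x | ∃ B ∈ 𝒜.sets, B ⊆ A ∧ x = m B}

theorem pp_bdd {m : Set Ω → ℝ} (hb : ∃ M, ∀ A ∈ 𝒜.sets, |m A| ≤ M) (A : Set Ω) :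
    BddAbove {x | ∃ B ∈ 𝒜.sets, B ⊆ A ∧ x = m B} := by
  obtain ⟨M, hM⟩ := hb
  refine ⟨M, ?_⟩
  rintro x ⟨B, hB, -, rfl⟩
  exact (le_abs_self _).trans (hM B hB)

theorem le_pp {m : Set Ω → ℝ} (hb : ∃ M, ∀ A ∈ 𝒜.sets, |m A| ≤ M) {A B : Set Ω}
    (hB : B ∈ 𝒜.sets) (h : B ⊆ A) : m B ≤ pp 𝒜 m A :=
  le_csSup (pp_bdd hb A) ⟨B, hB, h, rfl⟩

theorem pp_le {m : Set Ω → ℝ} {A : Set Ω} {x : ℝ}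
    (h : ∀ B ∈ 𝒜.sets, B ⊆ A → m B ≤ x) : pp 𝒜 m A ≤ x := by
  apply csSup_le
  · exact ⟨_, ∅, 𝒜.empty_mem, Set.empty_subset _, rfl⟩
  · rintro y ⟨B, hB, hs, rfl⟩
    exact h B hB hs

theorem pp_add {m : Set Ω → ℝ} (hm : IsFAdd 𝒜 m) (hb : ∃ M, ∀ A ∈ 𝒜.sets, |m A| ≤ M) :
    IsFAdd 𝒜 (pp 𝒜 m) := by
  refine ⟨?_, fun A B hA hB hd => le_antisymm ?_ ?_⟩
  · apply le_antisymm
    · apply pp_le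
      intro B _ hs
      rw [Set.subset_empty_iff.1 hs, hm.1]
    · rw [← hm.1]
      exact le_pp hb 𝒜.empty_mem subset_rfl
  · apply pp_le
    intro C hC hs
    have : C = (C ∩ A) ∪ (C ∩ B) := by
      rw [← Set.inter_union_distrib_left, Set.inter_eq_left.2 hs]
    rw [this, hm.2 _ _ (𝒜.inter_mem hC hA) (𝒜.inter_mem hC hB)
      (hd.mono Set.inter_subset_right Set.inter_subset_right)]
    exact add_le_add (le_pp hb (𝒜.inter_mem hC hA) Set.inter_subset_right)
      (le_pp hb (𝒜.inter_mem hC hB) Set.inter_subset_right)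
  · have h1 : pp 𝒜 m A ≤ pp 𝒜 m (A ∪ B) - pp 𝒜 m B := by
      apply pp_le
      intro C hC hCA
      have h2 : pp 𝒜 m B ≤ pp 𝒜 m (A ∪ B) - m C := by
        apply pp_le
        intro D hD hDB
        have := le_pp hb (𝒜.union_mem hC hD) (Set.union_subset_union hCA hDB)
        rw [hm.2 C D hC hD (hd.mono hCA hDB)] at this
        linarith
      linarith
    linarith

theorem neg_fadd {m : Set Ω → ℝ} (hm : IsFAdd 𝒜 m) : IsFAdd 𝒜 (fun A => - m A) := by
  refine ⟨by simp [hm.1], fun A B hA hB hd => ?_⟩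
  simp only [hm.2 A B hA hB hd]
  ring

theorem neg_bdd (mu : BAMeasure 𝒜) : ∃ M, ∀ A ∈ 𝒜.sets, |(fun A => - mu.toFun A) A| ≤ M := by
  simpa using mu.bounded

theorem var_eq (mu : BAMeasure 𝒜) (A : Set Ω) :
    var mu A = pp 𝒜 mu.toFun A + pp 𝒜 (fun A => - mu.toFun A) A := rfl

theorem var_fadd (mu : BAMeasure 𝒜) : IsFAdd 𝒜 (var mu) := by
  have h1 := pp_add mu.isFAdd mu.bounded
  have h2 := pp_add (neg_fadd mu.isFAdd) (neg_bdd mu)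
  refine ⟨by rw [var_eq, h1.1, h2.1, add_zero], fun A B hA hB hd => ?_⟩
  rw [var_eq, var_eq, var_eq, h1.2 A B hA hB hd, h2.2 A B hA hB hd]
  ring

theorem pp_nonneg {m : Set Ω → ℝ} (hm : IsFAdd 𝒜 m) (hb : ∃ M, ∀ A ∈ 𝒜.sets, |m A| ≤ M)
    (A : Set Ω) : 0 ≤ pp 𝒜 m A := by
  rw [← hm.1]
  exact le_pp hb 𝒜.empty_mem (Set.empty_subset _)

theorem var_nonneg (mu : BAMeasure 𝒜) (A : Set Ω) : 0 ≤ var mu A :=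
  add_nonneg (pp_nonneg mu.isFAdd mu.bounded A) (pp_nonneg (neg_fadd mu.isFAdd) (neg_bdd mu) A)

theorem abs_le_var (mu : BAMeasure 𝒜) {A : Set Ω} (hA : A ∈ 𝒜.sets) :
    |mu.toFun A| ≤ var mu A := by
  have h1 := pp_nonneg mu.isFAdd mu.bounded A
  have h2 := pp_nonneg (neg_fadd mu.isFAdd) (neg_bdd mu) A
  have h3 := le_pp mu.bounded hA (subset_refl A)
  have h4 := le_pp (neg_bdd mu) hA (subset_refl A)
  rw [var_eq, abs_le]
  constructor <;> linarith

theorem IsFAdd.mono {v : Set Ω → ℝ} (hv : IsFAdd 𝒜 v) (h0 : ∀ A, 0 ≤ v A) {A B : Set Ω}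
    (hA : A ∈ 𝒜.sets) (hB : B ∈ 𝒜.sets) (h : A ⊆ B) : v A ≤ v B := by
  have := hv.2 A (B \ A) hA (𝒜.diff_mem hB hA) Set.disjoint_sdiff_right
  rw [Set.union_diff_cancel h] at this
  have := h0 (B \ A)
  linarith

theorem outer_bdd (mu : BAMeasure 𝒜) (B : Set Ω) :
    BddBelow {x | ∃ A ∈ 𝒜.sets, B ⊆ A ∧ x = var mu A} := by
  refine ⟨0, ?_⟩
  rintro x ⟨A, -, -, rfl⟩
  exact var_nonneg mu A

theorem outer_nonneg (mu : BAMeasure 𝒜) (B : Set Ω) : 0 ≤ outer mu B := by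
  apply Real.sInf_nonneg
  rintro x ⟨A, -, -, rfl⟩
  exact var_nonneg mu A

theorem outer_le (mu : BAMeasure 𝒜) {A B : Set Ω} (hA : A ∈ 𝒜.sets) (h : B ⊆ A) :
    outer mu B ≤ var mu A :=
  csInf_le (outer_bdd mu B) ⟨A, hA, h, rfl⟩

theorem exists_of_outer_lt (mu : BAMeasure 𝒜) {B : Set Ω} {d : ℝ} (h : outer mu B < d) :
    ∃ A ∈ 𝒜.sets, B ⊆ A ∧ var mu A < d := by
  have hne : {x | ∃ A ∈ 𝒜.sets, B ⊆ A ∧ x = var mu A}.Nonempty :=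
    ⟨_, Set.univ, 𝒜.univ_mem, Set.subset_univ _, rfl⟩
  obtain ⟨x, ⟨A, hA, hs, rfl⟩, hx⟩ := exists_lt_of_csInf_lt hne h
  exact ⟨A, hA, hs, hx⟩

theorem outer_mono (mu : BAMeasure 𝒜) {B C : Set Ω} (h : B ⊆ C) : outer mu B ≤ outer mu C := by
  apply le_of_forall_gt
  intro d hd
  obtain ⟨A, hA, hs, hx⟩ := exists_of_outer_lt mu hd
  exact (outer_le mu hA (h.trans hs)).trans_lt hx

theorem dL0_le (lam : BAMeasure 𝒜) (f g : Ω → ℝ) {c : ℝ} (hc : 0 < c) :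
    dL0 lam f g ≤ c + outer lam {ω | c ≤ |f ω - g ω|} := by
  refine csInf_le (?_ : BddBelow {x | ∃ c > (0:ℝ), x = c + outer lam {ω | c ≤ |f ω - g ω|}})
    ⟨c, hc, rfl⟩
  refine ⟨0, ?_⟩
  rintro x ⟨c, hc, rfl⟩
  exact add_nonneg hc.le (outer_nonneg _ _)

theorem exists_of_dL0_lt (lam : BAMeasure 𝒜) {f g : Ω → ℝ} {d : ℝ} (h : dL0 lam f g < d) :
    ∃ c > 0, c < d ∧ ∃ A ∈ 𝒜.sets, {ω | c ≤ |f ω - g ω|} ⊆ A ∧ var lam A < d := by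
  have hne : {x | ∃ c > (0:ℝ), x = c + outer lam {ω | c ≤ |f ω - g ω|}}.Nonempty :=
    ⟨_, 1, one_pos, rfl⟩
  obtain ⟨x, ⟨c, hc, rfl⟩, hx⟩ := exists_lt_of_csInf_lt hne h
  have := outer_nonneg lam {ω | c ≤ |f ω - g ω|}
  exact ⟨c, hc, by linarith, exists_of_outer_lt lam (by linarith)⟩

/-- generalized simple maps -/
def SMap (𝒜 : SetAlg Ω) {α : Type*} (h : Ω → α) : Prop :=
  (Set.range h).Finite ∧ ∀ r : α, h ⁻¹' {r} ∈ 𝒜.sets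

theorem SMap.pair {α β : Type*} {f : Ω → α} {g : Ω → β} (hf : SMap 𝒜 f) (hg : SMap 𝒜 g) :
    SMap 𝒜 (fun ω => (f ω, g ω)) := by
  refine ⟨(hf.1.prod hg.1).subset ?_, fun r => ?_⟩
  · rintro _ ⟨ω, rfl⟩
    exact ⟨⟨ω, rfl⟩, ⟨ω, rfl⟩⟩
  · have : (fun ω => (f ω, g ω)) ⁻¹' {r} = f ⁻¹' {r.1} ∩ g ⁻¹' {r.2} := by
      ext ω
      simp [Prod.ext_iff]
    rw [this]
    exact 𝒜.inter_mem (hf.2 _) (hg.2 _)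

open scoped Classical in
theorem preimage_comp_eq {α β : Type*} {h : Ω → α} (hf : (Set.range h).Finite) (F : α → β) (r : β) :
    (fun ω => F (h ω)) ⁻¹' {r} = ⋃ t ∈ hf.toFinset.filter (fun t => F t = r), h ⁻¹' {t} := by
  ext ω
  simp

theorem SMap.comp {α β : Type*} {h : Ω → α} (hh : SMap 𝒜 h) (F : α → β) :
    SMap 𝒜 (fun ω => F (h ω)) := by
  classical
  refine ⟨(hh.1.image F).subset ?_, fun r => ?_⟩
  · rintro _ ⟨ω, rfl⟩
    exact ⟨_, ⟨ω, rfl⟩, rfl⟩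
  · rw [preimage_comp_eq hh.1]
    exact 𝒜.biUnion_mem _ _ fun i _ => hh.2 i

theorem disj_preimage {α : Type*} (h : Ω → α) {i j : α} (hij : i ≠ j) :
    Disjoint (h ⁻¹' {i}) (h ⁻¹' {j}) :=
  Disjoint.preimage h (by simpa using hij)

theorem simpleIntegral_comp {m : Set Ω → ℝ} (hm : IsFAdd 𝒜 m) {α : Type*} {h : Ω → α}
    (hh : SMap 𝒜 h) (F : α → ℝ) :
    simpleIntegral m (fun ω => F (h ω)) = ∑ t ∈ hh.1.toFinset, F t * m (h ⁻¹' {t}) := by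
  classical
  unfold simpleIntegral
  rw [finsum_eq_sum_of_support_subset (s := hh.1.toFinset.image F)]
  · rw [← Finset.sum_fiberwise_of_maps_to (s := hh.1.toFinset) (t := hh.1.toFinset.image F) (g := F)
      (fun i hi => Finset.mem_image_of_mem F hi)]
    refine Finset.sum_congr rfl fun r _ => ?_
    rw [preimage_comp_eq hh.1, hm.biUnion _ _ (fun i _ => hh.2 i)
      (fun i _ j _ hij => disj_preimage h hij), Finset.mul_sum]
    refine Finset.sum_congr ?_ ?_
    · ext; simp
    · intro t ht
      rw [(Finset.mem_filter.1 ht).2]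
  · intro r hr
    by_contra hcon
    apply hr
    have : (fun ω => F (h ω)) ⁻¹' {r} = ∅ := by
      ext ω
      simp only [Set.mem_preimage, Set.mem_singleton_iff, Set.mem_empty_iff_false, iff_false]
      rintro rfl
      exact hcon (by simp)
    simp only [this, hm.1, mul_zero]

theorem simpleIntegral_eq {m : Set Ω → ℝ} (hm : IsFAdd 𝒜 m) {s : Ω → ℝ}
    (hh : SMap 𝒜 s) :
    simpleIntegral m s = ∑ t ∈ hh.1.toFinset, t * m (s ⁻¹' {t}) :=
  simpleIntegral_comp hm hh id

theorem simpleIntegral_lin {m : Set Ω → ℝ} (hm : IsFAdd 𝒜 m) {f g : Ω → ℝ}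
    (hf : SMap 𝒜 f) (hg : SMap 𝒜 g) (a b : ℝ) :
    simpleIntegral m (fun ω => a * f ω + b * g ω) =
      a * simpleIntegral m f + b * simpleIntegral m g := by
  have hp := hf.pair hg
  have h1 := simpleIntegral_comp hm hp (fun p => a * p.1 + b * p.2)
  have h2 := simpleIntegral_comp hm hp (fun p => p.1)
  have h3 := simpleIntegral_comp hm hp (fun p => p.2)
  simp only at h1 h2 h3
  rw [h1, show simpleIntegral m f = _ from h2, show simpleIntegral m g = _ from h3,
    Finset.mul_sum, Finset.mul_sum, ← Finset.sum_add_distrib]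
  exact Finset.sum_congr rfl fun _ _ => by ring

theorem SMap.lin {f g : Ω → ℝ} (hf : SMap 𝒜 f) (hg : SMap 𝒜 g) (a b : ℝ) :
    SMap 𝒜 (fun ω => a * f ω + b * g ω) :=
  (hf.pair hg).comp (fun p => a * p.1 + b * p.2)

theorem simpleIntegral_bound {m v : Set Ω → ℝ} (hm : IsFAdd 𝒜 m) (hv : IsFAdd 𝒜 v)
    (h0 : ∀ A, 0 ≤ v A) (hmv : ∀ A ∈ 𝒜.sets, |m A| ≤ v A) {s : Ω → ℝ} (hs : SMap 𝒜 s)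
    {N : Set Ω} (hN : N ∈ 𝒜.sets) (hvN : v N = 0) {c : ℝ}
    (hb : ∀ ω, ω ∉ N → |s ω| ≤ c) :
    |simpleIntegral m s| ≤ c * v Set.univ := by
  rw [simpleIntegral_eq hm hs]
  have hu : v Set.univ = ∑ t ∈ hs.1.toFinset, v (s ⁻¹' {t}) := by
    rw [← hv.biUnion _ _ (fun i _ => hs.2 i) (fun i _ j _ hij => disj_preimage s hij)]
    congr 1
    ext ω
    simp
  rw [hu, Finset.mul_sum]
  refine (Finset.abs_sum_le_sum_abs _ _).trans (Finset.sum_le_sum fun t _ => ?_)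
  rw [abs_mul]
  by_cases ht : |t| ≤ c
  · exact mul_le_mul ht (hmv _ (hs.2 t)) (abs_nonneg _) ((abs_nonneg _).trans ht)
  · have hsub : s ⁻¹' {t} ⊆ N := by
      intro ω hω
      by_contra hn
      have := hb ω hn
      rw [show s ω = t from hω] at this
      exact ht this
    have h1 : v (s ⁻¹' {t}) = 0 :=
      le_antisymm ((hv.mono h0 (hs.2 t) hN hsub).trans_eq hvN) (h0 _)
    have h2 : |m (s ⁻¹' {t})| = 0 :=
      le_antisymm ((hmv _ (hs.2 t)).trans_eq h1) (abs_nonneg _)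
    rw [h1, h2]
    simp

theorem si_bound (mu : BAMeasure 𝒜) {s t : Ω → ℝ} (hs : SMap 𝒜 s) (ht : SMap 𝒜 t)
    {N : Set Ω} (hN : N ∈ 𝒜.sets) (hvN : var mu N = 0) {c : ℝ}
    (hb : ∀ ω, ω ∉ N → |s ω - t ω| ≤ c) :
    |simpleIntegral mu.toFun s - simpleIntegral mu.toFun t| ≤ c * var mu Set.univ := by
  have h := simpleIntegral_bound mu.isFAdd (var_fadd mu) (var_nonneg mu)
    (fun A hA => abs_le_var mu hA) (hs.lin ht 1 (-1)) hN hvN (c := c) ?_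
  · rw [simpleIntegral_lin mu.isFAdd hs ht] at h
    convert h using 2
    ring
  · intro ω hω
    convert hb ω hω using 2
    ring

theorem si_bound_var (mu : BAMeasure 𝒜) {s t : Ω → ℝ} (hs : SMap 𝒜 s) (ht : SMap 𝒜 t)
    {N : Set Ω} (hN : N ∈ 𝒜.sets) (hvN : var mu N = 0) {c : ℝ}
    (hb : ∀ ω, ω ∉ N → |s ω - t ω| ≤ c) :
    simpleIntegral (var mu) (fun ω => |s ω - t ω|) ≤ c * var mu Set.univ := by
  refine (le_abs_self _).trans (simpleIntegral_bound (var_fadd mu) (var_fadd mu) (var_nonneg mu)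
    (fun A _ => (abs_of_nonneg (var_nonneg mu A)).le)
    ((hs.pair ht).comp (fun p => |p.1 - p.2|)) hN hvN ?_)
  intro ω hω
  simpa using hb ω hω

/-- `μ`-null sets in the algebra -/
def Nul (mu : BAMeasure 𝒜) (N : Set Ω) : Prop := N ∈ 𝒜.sets ∧ var mu N = 0

theorem Nul.union {mu : BAMeasure 𝒜} {M N : Set Ω} (hM : Nul mu M) (hN : Nul mu N) :
    Nul mu (M ∪ N) := by
  refine ⟨𝒜.union_mem hM.1 hN.1, le_antisymm ?_ (var_nonneg _ _)⟩
  have h1 := (var_fadd mu).2 M (N \ M) hM.1 (𝒜.diff_mem hN.1 hM.1) Set.disjoint_sdiff_right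
  rw [Set.union_diff_self] at h1
  have h2 := (var_fadd mu).mono (var_nonneg mu) (𝒜.diff_mem hN.1 hM.1) hN.1 Set.diff_subset
  linarith [hM.2, hN.2]

theorem exists_gap {mu : BAMeasure 𝒜} (hmu : FiniteRange mu) :
    ∃ δ > 0, ∀ A ∈ 𝒜.sets, var mu A < δ → var mu A = 0 := by
  have hfin : (var mu '' 𝒜.sets).Finite := by
    have h2 : ((fun A => - mu.toFun A) '' 𝒜.sets).Finite := by
      have := hmu.image (fun x => -x)
      rwa [Set.image_image] at this
    have key : ∀ m : Set Ω → ℝ, (m '' 𝒜.sets).Finite → ∀ A, pp 𝒜 m A ∈ m '' 𝒜.sets := by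
      intro m hm A
      have hsub : {x | ∃ B ∈ 𝒜.sets, B ⊆ A ∧ x = m B} ⊆ m '' 𝒜.sets := by
        rintro x ⟨B, hB, -, rfl⟩
        exact ⟨B, hB, rfl⟩
      exact hsub (Set.Nonempty.csSup_mem ⟨_, ∅, 𝒜.empty_mem, Set.empty_subset _, rfl⟩
        (hm.subset hsub))
    refine ((Set.Finite.prod hmu h2).image (fun p => p.1 + p.2)).subset ?_
    rintro _ ⟨A, _, rfl⟩
    exact ⟨(_, _), ⟨key _ hmu A, key _ h2 A⟩, rfl⟩
  have hfin2 := hfin.subset (s := (var mu '' 𝒜.sets)) (t := (var mu '' 𝒜.sets) \ {0}) Set.diff_subset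
  have hopen : ((var mu '' 𝒜.sets) \ {0})ᶜ ∈ 𝓝 (0:ℝ) :=
    hfin2.isClosed.isOpen_compl.mem_nhds (by simp)
  obtain ⟨δ, hδ, hb⟩ := Metric.mem_nhds_iff.1 hopen
  refine ⟨δ, hδ, fun A hA hlt => ?_⟩
  by_contra hne
  refine hb (show var mu A ∈ Metric.ball 0 δ from ?_) ⟨⟨A, hA, rfl⟩, hne⟩
  rw [Metric.mem_ball, Real.dist_eq, sub_zero, abs_of_nonneg (var_nonneg _ _)]
  exact hlt

/-- characterization of the integral for finite-range measures -/
def HasInt (mu : BAMeasure 𝒜) (f : Ω → ℝ) (I : ℝ) : Prop :=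
  ∀ c > (0:ℝ), ∃ s, SMap 𝒜 s ∧ (∃ N, Nul mu N ∧ ∀ ω, ω ∉ N → |s ω - f ω| ≤ c) ∧
    |simpleIntegral mu.toFun s - I| ≤ c

theorem eventually_null {mu : BAMeasure 𝒜} (hmu : FiniteRange mu) {s : ℕ → Ω → ℝ} {f : Ω → ℝ}
    (h : LConv mu s f) {c : ℝ} (hc : 0 < c) :
    ∃ K, ∀ n ≥ K, ∃ N, Nul mu N ∧ ∀ ω, ω ∉ N → |s n ω - f ω| ≤ c := by
  obtain ⟨δ, hδ, hgap⟩ := exists_gap hmu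
  obtain ⟨K, hK⟩ := Filter.eventually_atTop.1 ((h c hc).eventually_lt_const hδ)
  refine ⟨K, fun n hn => ?_⟩
  obtain ⟨A, hA, hs, hv⟩ := exists_of_outer_lt mu (hK n hn)
  refine ⟨A, ⟨hA, hgap A hA hv⟩, fun ω hω => ?_⟩
  by_contra hcon
  exact hω (hs (not_le.1 hcon))

theorem close_of_two {mu : BAMeasure 𝒜} {s t f : Ω → ℝ} {c d : ℝ}
    (hs : ∃ N, Nul mu N ∧ ∀ ω, ω ∉ N → |s ω - f ω| ≤ c)
    (ht : ∃ N, Nul mu N ∧ ∀ ω, ω ∉ N → |t ω - f ω| ≤ d) :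
    ∃ N, Nul mu N ∧ ∀ ω, ω ∉ N → |s ω - t ω| ≤ c + d := by
  obtain ⟨M, hM, h1⟩ := hs
  obtain ⟨N, hN, h2⟩ := ht
  refine ⟨M ∪ N, hM.union hN, fun ω hω => ?_⟩
  have a := h1 ω fun h => hω (Or.inl h)
  have b := h2 ω fun h => hω (Or.inr h)
  rw [abs_sub_comm] at b
  exact (abs_sub_le _ (f ω) _).trans (add_le_add a b)

theorem small_mul (V : ℝ) (hV : 0 ≤ V) {ε : ℝ} (hε : 0 < ε) :
    ∃ c > 0, c ≤ ε ∧ c * V < ε := by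
  refine ⟨ε / (V + 1), by positivity, div_le_self hε.le (by linarith), ?_⟩
  rw [div_mul_eq_mul_div, div_lt_iff₀ (by positivity)]
  nlinarith

theorem HasInt.memL1 {mu : BAMeasure 𝒜} {f : Ω → ℝ} {I : ℝ} (h : HasInt mu f I) :
    MemL1 mu f := by
  choose s hs hN _ using fun n : ℕ => h (1 / ((n:ℝ) + 1)) (by positivity)
  have hlim : Tendsto (fun n : ℕ => 1 / ((n:ℝ) + 1)) atTop (𝓝 0) :=
    tendsto_one_div_add_atTop_nhds_zero_nat
  refine ⟨s, hs, fun c hc => ?_, fun ε hε => ?_⟩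
  · refine tendsto_const_nhds.congr' ?_
    filter_upwards [hlim.eventually_lt_const hc] with n hn
    obtain ⟨N, hN, hb⟩ := hN n
    refine le_antisymm (outer_nonneg _ _) ?_
    rw [← hN.2]
    refine outer_le mu hN.1 fun ω hω => ?_
    by_contra hcon
    have h1 := hb ω hcon
    have h2 : c < |s n ω - f ω| := hω
    linarith
  · obtain ⟨c, hc, -, hcV⟩ := small_mul _ (var_nonneg mu Set.univ) hε
    obtain ⟨K, hK⟩ := Filter.eventually_atTop.1 (hlim.eventually_lt_const (half_pos hc))
    refine ⟨K, fun m hm n hn => ?_⟩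
    obtain ⟨N, hNN, hb⟩ := close_of_two (hN m) (hN n)
    refine (si_bound_var mu (hs m) (hs n) hNN.1 hNN.2 (c := c) fun ω hω => ?_).trans_lt hcV
    linarith [hb ω hω, hK m hm, hK n hn]

theorem HasInt.integral_eq {mu : BAMeasure 𝒜} (hmu : FiniteRange mu) {f : Ω → ℝ} {I : ℝ}
    (h : HasInt mu f I) : integral mu f = I := by
  have hm := h.memL1
  unfold integral
  rw [dif_pos hm]
  have hsp := hm.choose_spec
  set s := hm.choose
  apply Tendsto.limUnder_eq
  rw [Metric.tendsto_atTop]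
  intro ε hε
  obtain ⟨c, hc, hce, hcV⟩ := small_mul _ (var_nonneg mu Set.univ) (half_pos hε)
  obtain ⟨K, hK⟩ := eventually_null hmu hsp.2.1 (half_pos hc)
  refine ⟨K, fun n hn => ?_⟩
  obtain ⟨t, ht, htN, htI⟩ := h (c / 2) (half_pos hc)
  obtain ⟨N, hN, hb⟩ := close_of_two (hK n hn) htN
  have h1 := si_bound mu (hsp.1 n) ht hN.1 hN.2 hb
  rw [add_halves] at h1
  rw [Real.dist_eq]
  have h2 := abs_sub_le (simpleIntegral mu.toFun (s n)) (simpleIntegral mu.toFun t) I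
  linarith

theorem HasInt.lin {mu : BAMeasure 𝒜} {f g : Ω → ℝ} {I J : ℝ}
    (hf : HasInt mu f I) (hg : HasInt mu g J) (a b : ℝ) :
    HasInt mu (fun ω => a * f ω + b * g ω) (a * I + b * J) := by
  intro ε hε
  obtain ⟨c, hc, -, hcV⟩ := small_mul (|a| + |b|) (by positivity) hε
  obtain ⟨s, hs, ⟨M, hM, hsM⟩, hsI⟩ := hf c hc
  obtain ⟨t, ht, ⟨N, hN, htN⟩, htI⟩ := hg c hc
  have key : ∀ x y x' y' : ℝ, |x - x'| ≤ c → |y - y'| ≤ c →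
      |a * x + b * y - (a * x' + b * y')| ≤ ε := by
    intro x y x' y' hx hy
    have : a * x + b * y - (a * x' + b * y') = a * (x - x') + b * (y - y') := by ring
    rw [this]
    refine (abs_add_le _ _).trans ?_
    rw [abs_mul, abs_mul]
    have h1 := mul_le_mul_of_nonneg_left hx (abs_nonneg a)
    have h2 := mul_le_mul_of_nonneg_left hy (abs_nonneg b)
    nlinarith
  refine ⟨_, hs.lin ht a b, ⟨M ∪ N, hM.union hN, fun ω hω => ?_⟩, ?_⟩
  · exact key _ _ _ _ (hsM ω fun h => hω (Or.inl h)) (htN ω fun h => hω (Or.inr h))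
  · rw [simpleIntegral_lin mu.isFAdd hs ht]
    exact key _ _ _ _ hsI htI

theorem hasInt_simple (mu : BAMeasure 𝒜) {s : Ω → ℝ} (hs : SMap 𝒜 s) :
    HasInt mu s (simpleIntegral mu.toFun s) := by
  intro c hc
  refine ⟨s, hs, ⟨∅, ⟨𝒜.empty_mem, (var_fadd mu).1⟩, fun ω _ => ?_⟩, ?_⟩ <;> simpa using hc.le

theorem lconv_of_absCont {lam mu : BAMeasure 𝒜} (h : AbsCont mu lam) {s : ℕ → Ω → ℝ} {f : Ω → ℝ}
    (hs : LConv lam s f) : LConv mu s f := by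
  intro c hc
  rw [Metric.tendsto_atTop]
  intro ε hε
  obtain ⟨δ, hδ, hd⟩ := h ε hε
  obtain ⟨K, hK⟩ := Filter.eventually_atTop.1 ((hs c hc).eventually_lt_const hδ)
  refine ⟨K, fun n hn => ?_⟩
  obtain ⟨A, hA, hsub, hv⟩ := exists_of_outer_lt lam (hK n hn)
  rw [Real.dist_eq, sub_zero, abs_of_nonneg (outer_nonneg _ _)]
  exact (outer_le mu hA hsub).trans_lt (hd A hA hv)

theorem exists_hasInt {lam mu : BAMeasure 𝒜} (h : BA0rel lam mu) {f : Ω → ℝ} (hf : f ∈ L0 lam) :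
    ∃ I, HasInt mu f I := by
  obtain ⟨s, hs, hl⟩ := hf
  have hl' := lconv_of_absCont h.2 hl
  have hcau : CauchySeq (fun n => simpleIntegral mu.toFun (s n)) := by
    rw [Metric.cauchySeq_iff]
    intro ε hε
    obtain ⟨c, hc, -, hcV⟩ := small_mul _ (var_nonneg mu Set.univ) hε
    obtain ⟨K, hK⟩ := eventually_null h.1 hl' (half_pos hc)
    refine ⟨K, fun m hm n hn => ?_⟩
    obtain ⟨N, hN, hb⟩ := close_of_two (hK m hm) (hK n hn)
    have h1 := si_bound mu (hs m) (hs n) hN.1 hN.2 hb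
    rw [add_halves] at h1
    rw [Real.dist_eq]
    linarith
  obtain ⟨I, hI⟩ := cauchySeq_tendsto_of_complete hcau
  refine ⟨I, fun c hc => ?_⟩
  obtain ⟨K, hK⟩ := eventually_null h.1 hl' hc
  obtain ⟨K', hK'⟩ := Metric.tendsto_atTop.1 hI c hc
  refine ⟨s (max K K'), hs _, hK _ (le_max_left _ _), ?_⟩
  have := hK' _ (le_max_right K K')
  rw [Real.dist_eq] at this
  exact this.le

theorem hasInt_integral {lam mu : BAMeasure 𝒜} (h : BA0rel lam mu) {f : Ω → ℝ}
    (hf : f ∈ L0 lam) : HasInt mu f (integral mu f) := by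
  obtain ⟨I, hI⟩ := exists_hasInt h hf
  rwa [hI.integral_eq h.1]

theorem linear_integral {lam mu : BAMeasure 𝒜} (h : BA0rel lam mu) :
    LinearOnL0 lam (fun f => integral mu f) := by
  constructor
  · intro f hf g hg
    have := ((hasInt_integral h hf).lin (hasInt_integral h hg) 1 1).integral_eq h.1
    simpa [Pi.add_def] using this
  · intro a f hf
    have := ((hasInt_integral h hf).lin (hasInt_integral h hf) a 0).integral_eq h.1
    simpa [Pi.smul_def] using this

theorem continuous_integral {lam mu : BAMeasure 𝒜} (h : BA0rel lam mu) :
    ContinuousOnL0 lam (fun f => integral mu f) := by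
  intro f hf ε hε
  obtain ⟨η, hη, hgap⟩ := exists_gap h.1
  obtain ⟨δ, hδ, hac⟩ := h.2 η hη
  obtain ⟨c, hc, hce, hcV⟩ := small_mul _ (var_nonneg mu Set.univ) (half_pos hε)
  refine ⟨min δ (c / 3), by positivity, fun g hg hd => ?_⟩
  obtain ⟨r, hr, hr', A, hA, hsub, hv⟩ := exists_of_dL0_lt lam hd
  have hnul : Nul mu A := ⟨hA, hgap A hA (hac A hA (hv.trans_le (min_le_left _ _)))⟩
  have hrc : r < c / 3 := hr'.trans_le (min_le_right _ _)
  have hc3 : 0 < c / 3 := by positivity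
  obtain ⟨s, hs, hsM, hsI⟩ := hasInt_integral h hg (c/3) hc3
  obtain ⟨t, ht, ⟨N, hN, htN⟩, htI⟩ := hasInt_integral h hf (c/3) hc3
  have h1 : ∃ N, Nul mu N ∧ ∀ ω, ω ∉ N → |t ω - g ω| ≤ c/3 + c/3 := by
    refine ⟨N ∪ A, hN.union hnul, fun ω hω => ?_⟩
    have a := htN ω fun h => hω (Or.inl h)
    have b : |g ω - f ω| < r := by
      by_contra hcon
      exact hω (Or.inr (hsub (not_lt.1 hcon)))
    rw [abs_sub_comm] at b
    linarith [abs_sub_le (t ω) (f ω) (g ω)]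
  obtain ⟨P, hP, hb⟩ := close_of_two hsM h1
  have h2 := si_bound mu hs ht hP.1 hP.2 hb
  have h3 : c / 3 + (c/3 + c/3) = c := by ring
  rw [h3] at h2
  rw [abs_sub_comm] at hsI
  have h4 := abs_sub_le (integral mu g) (simpleIntegral mu.toFun s) (integral mu f)
  have h5 := abs_sub_le (simpleIntegral mu.toFun s) (simpleIntegral mu.toFun t) (integral mu f)
  show |integral mu g - integral mu f| < ε
  linarith

theorem simple_mem_L0 (lam : BAMeasure 𝒜) {s : Ω → ℝ} (hs : SMap 𝒜 s) : s ∈ L0 lam := by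
  refine ⟨fun _ => s, fun _ => hs, fun c hc => ?_⟩
  have : outer lam {ω | c < |s ω - s ω|} = 0 := by
    refine le_antisymm ?_ (outer_nonneg _ _)
    rw [← (var_fadd lam).1]
    refine outer_le lam 𝒜.empty_mem fun ω hω => ?_
    simp at hω
    linarith
  simp only [this]
  exact tendsto_const_nhds

theorem indicator_simple {A : Set Ω} (hA : A ∈ 𝒜.sets) :
    SMap 𝒜 (A.indicator (fun _ => (1:ℝ))) := by
  classical
  have hp : SMap 𝒜 (fun ω => ω ∈ A) := by
    refine ⟨Set.toFinite _, fun r => ?_⟩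
    by_cases hr : r
    · convert hA using 1
      ext ω; simp [hr]
    · convert 𝒜.compl_mem hA using 1
      ext ω; simp [hr]
  exact hp.comp (fun p : Prop => if p then (1:ℝ) else 0)

theorem phi_simple {lam : BAMeasure 𝒜} {φ : (Ω → ℝ) → ℝ} (hφ : LinearOnL0 lam φ) {ι : Type*}
    (T : Finset ι) (a : ι → ℝ) (A : ι → Set Ω) (hA : ∀ i, A i ∈ 𝒜.sets) :
    SMap 𝒜 (∑ i ∈ T, a i • (A i).indicator (fun _ => (1:ℝ))) ∧
    φ (∑ i ∈ T, a i • (A i).indicator (fun _ => (1:ℝ))) =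
      ∑ i ∈ T, a i * φ ((A i).indicator (fun _ => (1:ℝ))) := by
  classical
  induction T using Finset.induction_on with
  | empty =>
    have h0 : SMap 𝒜 (0 : Ω → ℝ) := by
      have := (indicator_simple 𝒜.empty_mem)
      rwa [Set.indicator_empty] at this
    refine ⟨by simpa using h0, ?_⟩
    have := hφ.2 0 _ (simple_mem_L0 lam h0)
    simpa using this
  | insert i T hi ih =>
    have h1 : SMap 𝒜 (a i • (A i).indicator (fun _ => (1:ℝ))) :=
      (indicator_simple (hA i)).comp (fun x => a i * x)
    rw [Finset.sum_insert hi, Finset.sum_insert hi]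
    refine ⟨(h1.pair ih.1).comp (fun p => p.1 + p.2), ?_⟩
    rw [hφ.1 _ (simple_mem_L0 lam h1) _ (simple_mem_L0 lam ih.1), ih.2,
      hφ.2 _ _ (simple_mem_L0 lam (indicator_simple (hA i)))]

theorem finite_range_aux {lam : BAMeasure 𝒜} {m : Set Ω → ℝ} (hm : IsFAdd 𝒜 m) {δ : ℝ}
    (h : ∀ A ∈ 𝒜.sets, var lam A < δ → m A = 0) (n : ℕ) :
    ∀ A ∈ 𝒜.sets, var lam A < n * δ → (m '' {B | B ∈ 𝒜.sets ∧ B ⊆ A}).Finite := by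
  induction n with
  | zero =>
    intro A hA hv
    have := var_nonneg lam A
    simp at hv
    linarith
  | succ n ih =>
    intro A hA hv
    push_cast at hv
    by_cases hex : ∃ B ∈ 𝒜.sets, B ⊆ A ∧ m B ≠ 0 ∧ m (A \ B) ≠ 0
    · obtain ⟨B, hB, hBA, h1, h2⟩ := hex
      have hD := 𝒜.diff_mem hA hB
      have e := (var_fadd lam).2 B (A \ B) hB hD Set.disjoint_sdiff_right
      rw [Set.union_diff_cancel hBA] at e
      have v1 : δ ≤ var lam B := by
        by_contra hc
        exact h1 (h B hB (not_le.1 hc))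
      have v2 : δ ≤ var lam (A \ B) := by
        by_contra hc
        exact h2 (h _ hD (not_le.1 hc))
      have f1 := ih B hB (by linarith)
      have f2 := ih _ hD (by linarith)
      refine ((f1.prod f2).image (fun p => p.1 + p.2)).subset ?_
      rintro _ ⟨C, ⟨hC, hCA⟩, rfl⟩
      refine ⟨(m (C ∩ B), m (C \ B)), ⟨⟨_, ⟨𝒜.inter_mem hC hB, Set.inter_subset_right⟩, rfl⟩,
        ⟨_, ⟨𝒜.diff_mem hC hB, Set.diff_subset_diff_left hCA⟩, rfl⟩⟩, ?_⟩
      have := hm.2 (C ∩ B) (C \ B) (𝒜.inter_mem hC hB) (𝒜.diff_mem hC hB)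
        (Set.disjoint_sdiff_right.mono_left Set.inter_subset_right)
      rw [Set.inter_union_diff] at this
      exact this.symm
    · refine (Set.toFinite {0, m A}).subset ?_
      rintro _ ⟨C, ⟨hC, hCA⟩, rfl⟩
      by_cases h0 : m C = 0
      · simp [h0]
      · have h1 : m (A \ C) = 0 := by
          by_contra hc
          exact hex ⟨C, hC, hCA, h0, hc⟩
        have := hm.2 C (A \ C) hC (𝒜.diff_mem hA hC) Set.disjoint_sdiff_right
        rw [Set.union_diff_cancel hCA, h1, add_zero] at this
        simp [this]

theorem eq_of_continuous {lam : BAMeasure 𝒜} {φ ψ : (Ω → ℝ) → ℝ} (hφ : ContinuousOnL0 lam φ)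
    (hψ : ContinuousOnL0 lam ψ) (h : ∀ s, SMap 𝒜 s → φ s = ψ s) :
    ∀ f ∈ L0 lam, φ f = ψ f := by
  intro f hf
  rw [← sub_eq_zero]
  by_contra hne
  have hpos := abs_pos.2 hne
  obtain ⟨δ, hδ, h1⟩ := hφ f hf _ (half_pos hpos)
  obtain ⟨δ', hδ', h2⟩ := hψ f hf _ (half_pos hpos)
  obtain ⟨s, hs, hl⟩ := id hf
  set η := min δ δ' with hη
  have hη0 : 0 < η := lt_min hδ hδ'
  have h4 : 0 < η / 4 := by positivity
  obtain ⟨n, hn⟩ := ((hl (η/4) h4).eventually_lt_const (half_pos hη0)).exists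
  have hd : dL0 lam (s n) f < η := by
    have a := dL0_le lam (s n) f (half_pos hη0)
    have b : outer lam {ω | η / 2 ≤ |s n ω - f ω|} ≤ outer lam {ω | η / 4 < |s n ω - f ω|} := by
      apply outer_mono
      intro ω hω
      have : η / 2 ≤ |s n ω - f ω| := hω
      show η / 4 < |s n ω - f ω|
      linarith
    linarith
  have a := h1 _ (simple_mem_L0 lam (hs n)) (hd.trans_le (min_le_left _ _))
  have b := h2 _ (simple_mem_L0 lam (hs n)) (hd.trans_le (min_le_right _ _))
  rw [h _ (hs n), abs_sub_comm] at a
  have := abs_sub_le (φ f) (ψ (s n)) (ψ f)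
  linarith

theorem phi_gap {lam : BAMeasure 𝒜} {φ : (Ω → ℝ) → ℝ} (hφ : LinearOnL0 lam φ)
    (hc : ContinuousOnL0 lam φ) :
    ∃ δ > 0, ∀ A ∈ 𝒜.sets, var lam A < δ → φ (A.indicator (fun _ => (1:ℝ))) = 0 := by
  have hz : (∅ : Set Ω).indicator (fun _ => (1:ℝ)) = 0 := Set.indicator_empty _
  have h0 : (0 : Ω → ℝ) ∈ L0 lam := by
    rw [← hz]
    exact simple_mem_L0 lam (indicator_simple 𝒜.empty_mem)
  have hφ0 : φ 0 = 0 := by simpa using hφ.2 0 0 h0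
  obtain ⟨δ, hδ, h⟩ := hc 0 h0 1 one_pos
  refine ⟨δ, hδ, fun A hA hv => ?_⟩
  by_contra hne
  set x := φ (A.indicator (fun _ => (1:ℝ))) with hx
  have hs := indicator_simple hA
  have hlt := h ((1 / x) • A.indicator (fun _ => (1:ℝ)))
    (simple_mem_L0 lam (hs.comp (fun y => (1 / x) * y))) ?_
  · rw [hφ.2 _ _ (simple_mem_L0 lam hs), hφ0, ← hx, one_div, inv_mul_cancel₀ hne] at hlt
    norm_num at hlt
  · have hp : 0 < (δ - var lam A) / 2 := by linarith
    have a := dL0_le lam ((1 / x) • A.indicator (fun _ => (1:ℝ))) 0 hp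
    have b : outer lam {ω | (δ - var lam A) / 2 ≤
        |((1 / x) • A.indicator (fun _ => (1:ℝ))) ω - (0 : Ω → ℝ) ω|} ≤ var lam A := by
      apply outer_le lam hA
      intro ω hω
      by_contra hcon
      simp only [Set.mem_setOf_eq, Pi.smul_apply, Set.indicator_of_notMem hcon, Pi.zero_apply,
        smul_zero, sub_zero, abs_zero] at hω
      linarith
    linarith

theorem simpleIntegral_indicator (mu : BAMeasure 𝒜) {A : Set Ω} (hA : A ∈ 𝒜.sets) :
    simpleIntegral mu.toFun (A.indicator (fun _ => (1:ℝ))) = mu.toFun A := by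
  classical
  unfold simpleIntegral
  rw [finsum_eq_single _ (1:ℝ)]
  · rw [one_mul]
    congr 1
    ext ω
    by_cases h : ω ∈ A <;> simp [h]
  · intro r hr
    by_cases h0 : r = 0
    · simp [h0]
    · have : (A.indicator (fun _ => (1:ℝ))) ⁻¹' {r} = ∅ := by
        ext ω
        by_cases h : ω ∈ A <;> simp [h, Ne.symm hr, Ne.symm h0]
      rw [this, mu.map_empty, mul_zero]

theorem representation {lam : BAMeasure 𝒜} {φ : (Ω → ℝ) → ℝ} (hφ : LinearOnL0 lam φ)
    (hc : ContinuousOnL0 lam φ) :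
    ∃ mu : BAMeasure 𝒜, BA0rel lam mu ∧ (∀ f ∈ L0 lam, φ f = integral mu f) := by
  classical
  obtain ⟨δ, hδ, hgap⟩ := phi_gap hφ hc
  set m : Set Ω → ℝ := fun A => φ (A.indicator (fun _ => (1:ℝ))) with hmdef
  have hm : IsFAdd 𝒜 m := by
    have hadd : ∀ A B : Set Ω, A ∈ 𝒜.sets → B ∈ 𝒜.sets → Disjoint A B →
        m (A ∪ B) = m A + m B := by
      intro A B hA hB hd
      simp only [hmdef]
      rw [Set.indicator_union_of_disjoint hd, ← hφ.1 _ (simple_mem_L0 lam (indicator_simple hA)) _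
        (simple_mem_L0 lam (indicator_simple hB))]
      rfl
    refine ⟨?_, hadd⟩
    have := hadd ∅ ∅ 𝒜.empty_mem 𝒜.empty_mem (by simp)
    rw [Set.union_empty] at this
    linarith
  obtain ⟨n, hn⟩ := exists_nat_gt (var lam Set.univ / δ)
  have hfin : (m '' 𝒜.sets).Finite := by
    have := finite_range_aux hm hgap n Set.univ 𝒜.univ_mem (by rwa [div_lt_iff₀ hδ] at hn)
    simpa using this
  have hbdd : ∃ M : ℝ, ∀ A ∈ 𝒜.sets, |m A| ≤ M := by
    obtain ⟨M, hM⟩ := (hfin.image (fun x => |x|)).bddAbove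
    exact ⟨M, fun A hA => hM ⟨_, ⟨A, hA, rfl⟩, rfl⟩⟩
  let mu : BAMeasure 𝒜 := ⟨m, hm.1, fun A B hA hB hd => hm.2 A B hA hB hd, hbdd⟩
  have hrel : BA0rel lam mu := by
    refine ⟨hfin, fun ε hε => ⟨δ, hδ, fun A hA hv => ?_⟩⟩
    have hz : ∀ B ∈ 𝒜.sets, B ⊆ A → m B = 0 := fun B hB hBA =>
      hgap B hB (((var_fadd lam).mono (var_nonneg lam) hB hA hBA).trans_lt hv)
    have h1 : pp 𝒜 mu.toFun A ≤ 0 := pp_le fun B hB hBA => (hz B hB hBA).le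
    have h2 : pp 𝒜 (fun A => - mu.toFun A) A ≤ 0 := pp_le fun B hB hBA => by
      show - m B ≤ 0
      rw [hz B hB hBA, neg_zero]
    rw [var_eq]
    linarith
  refine ⟨mu, hrel, eq_of_continuous hc (continuous_integral hrel) fun s hs => ?_⟩
  rw [(hasInt_simple mu hs).integral_eq hrel.1, simpleIntegral_eq mu.isFAdd hs]
  have key := (phi_simple hφ hs.1.toFinset (fun t => t) (fun t => s ⁻¹' {t}) hs.2).2
  have hsum : ∑ t ∈ hs.1.toFinset, t • (s ⁻¹' {t}).indicator (fun _ => (1:ℝ)) = s := by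
    ext ω
    rw [Finset.sum_apply, Finset.sum_eq_single (s ω)]
    · simp
    · intro t _ ht
      have : ω ∉ s ⁻¹' {t} := fun h => ht (Eq.symm h)
      simp [Set.indicator_of_notMem this]
    · intro h
      exact absurd (by simp) h
  rw [hsum] at key
  exact key

/-- Theorem 2 (Riesz representation): `μ ↦ (f ↦ ∫ f dμ)` is a linear isomorphism from
`ba₀(λ)` onto the continuous linear functionals on `L⁰(λ)`: every `f ∈ L⁰(λ)` is
`μ`-integrable for every `μ ∈ ba₀(λ)`, the functional `f ↦ ∫ f dμ` is linear and continuous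
on `L⁰(λ)`, and every continuous linear functional on `L⁰(λ)` is represented by a unique
`μ ∈ ba₀(λ)`. -/
theorem stmt_1 {Ω : Type*} {𝒜 : SetAlg Ω} (lam : BAMeasure 𝒜) :
    (∀ mu : BAMeasure 𝒜, BA0rel lam mu → ∀ f ∈ L0 lam, MemL1 mu f) ∧
    (∀ mu : BAMeasure 𝒜, BA0rel lam mu →
      LinearOnL0 lam (fun f => integral mu f) ∧
      ContinuousOnL0 lam (fun f => integral mu f)) ∧
    (∀ φ : (Ω → ℝ) → ℝ, LinearOnL0 lam φ → ContinuousOnL0 lam φ →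
      ∃ mu : BAMeasure 𝒜, BA0rel lam mu ∧ (∀ f ∈ L0 lam, φ f = integral mu f) ∧
        ∀ nu : BAMeasure 𝒜, BA0rel lam nu → (∀ f ∈ L0 lam, φ f = integral nu f) →
          ∀ A ∈ 𝒜.sets, nu.toFun A = mu.toFun A) := by
  refine ⟨fun mu h f hf => (hasInt_integral h hf).memL1,
    fun mu h => ⟨linear_integral h, continuous_integral h⟩, fun φ hφ hc => ?_⟩
  obtain ⟨mu, hrel, hrep⟩ := representation hφ hc
  refine ⟨mu, hrel, hrep, fun nu hnu hnurep A hA => ?_⟩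
  have hs := indicator_simple hA
  have h1 := hrep _ (simple_mem_L0 lam hs)
  rw [hnurep _ (simple_mem_L0 lam hs), (hasInt_simple nu hs).integral_eq hnu.1,
    (hasInt_simple mu hs).integral_eq hrel.1, simpleIntegral_indicator nu hA,
    simpleIntegral_indicator mu hA] at h1
  exact h1

end FA
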